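/- (S-2-links pairs) Let n ≥ 3. Let l₁ = aₙ and l₂ = b₁ be the two link elements of M_{n,n}, let x ∈ {a₁,…,aₙ} ∖ {aₙ} and y ∈ {b₁,…,bₙ} ∖ {b₁}. If S = {l₁, l₂} and T = {x, y}, then (S, T) is a maximal ST-pair of M_{n,n}. -/

import Mathlib

set_option linter.unreachableTactic false
set_option linter.unusedTactic false
set_option linter.unnecessarySeqFocus false

/-- The underlying set of the lattice `M_{n,n}`: a bottom element `0`, a top
element `1`, and two levels `a₁, …, aₙ` and `b₁, …, bₙ`.  Here `a i` (for
`i : Fin n`) stands for `a_{i+1}` and `b j` for `b_{j+1}`, so the link elements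
are `aₙ = a ⟨n-1, _⟩` and `b₁ = b ⟨0, _⟩`. -/
inductive Mnn (n : ℕ) : Type where
  | bot : Mnn n
  | top : Mnn n
  | a : Fin n → Mnn n
  | b : Fin n → Mnn n
deriving DecidableEq

namespace Mnn

/-- The order of `M_{n,n}`: `0` is least, `1` is greatest, `aᵢ ≤ b₁` for every
`i`, `aₙ ≤ bⱼ` for every `j`, and there are no other comparabilities besides
those forced by reflexivity. -/
def le {n : ℕ} : Mnn n → Mnn n → Prop
  | .bot, _ => True
  | .top, .top => True
  | .top, .bot => False
  | .top, .a _ => False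
  | .top, .b _ => False
  | .a _, .top => True
  | .a _, .bot => False
  | .a i, .a j => i = j
  | .a i, .b j => (j : ℕ) = 0 ∨ (i : ℕ) = n - 1
  | .b _, .top => True
  | .b _, .bot => False
  | .b _, .a _ => False
  | .b i, .b j => i = j

/-- The join operation of `M_{n,n}`. -/
def sup {n : ℕ} : Mnn n → Mnn n → Mnn n
  | .bot, x => x
  | .top, _ => .top
  | .a i, .bot => .a i
  | .a _, .top => .top
  | .a i, .a j => if i = j then .a i else .b ⟨0, Nat.lt_of_le_of_lt (Nat.zero_le _) i.isLt⟩
  | .a i, .b j => if (j : ℕ) = 0 ∨ (i : ℕ) = n - 1 then .b j else .top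
  | .b i, .bot => .b i
  | .b _, .top => .top
  | .b i, .a j => if (i : ℕ) = 0 ∨ (j : ℕ) = n - 1 then .b i else .top
  | .b i, .b j => if i = j then .b i else .top

/-- The meet operation of `M_{n,n}`. -/
def inf {n : ℕ} : Mnn n → Mnn n → Mnn n
  | .bot, _ => .bot
  | .top, x => x
  | .a _, .bot => .bot
  | .a i, .top => .a i
  | .a i, .a j => if i = j then .a i else .bot
  | .a i, .b j => if (j : ℕ) = 0 ∨ (i : ℕ) = n - 1 then .a i else .bot
  | .b _, .bot => .bot
  | .b i, .top => .b i
  | .b i, .a j => if (i : ℕ) = 0 ∨ (j : ℕ) = n - 1 then .a j else .bot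
  | .b i, .b j => if i = j then .b i
      else .a ⟨n - 1, Nat.sub_lt (Nat.lt_of_le_of_lt (Nat.zero_le _) i.isLt) Nat.one_pos⟩

theorem le_refl' {n : ℕ} (x : Mnn n) : le x x := by cases x <;> simp [le]

theorem le_trans' {n : ℕ} (x y z : Mnn n) (hxy : le x y) (hyz : le y z) : le x z := by
  cases x <;> cases y <;> cases z <;> simp_all [le] <;> omega

theorem le_antisymm' {n : ℕ} (x y : Mnn n) (hxy : le x y) (hyx : le y x) : x = y := by
  cases x <;> cases y <;> simp_all [le]

theorem le_sup_left' {n : ℕ} (x y : Mnn n) : le x (sup x y) := by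
  cases x <;> cases y <;> dsimp only [sup] <;> (try split_ifs) <;> simp_all [le]

theorem le_sup_right' {n : ℕ} (x y : Mnn n) : le y (sup x y) := by
  cases x <;> cases y <;> dsimp only [sup] <;> (try split_ifs) <;> simp_all [le]

theorem sup_le' {n : ℕ} (x y z : Mnn n) (hxz : le x z) (hyz : le y z) :
    le (sup x y) z := by
  cases x <;> cases y <;> cases z <;> dsimp only [sup] <;> (try split_ifs) <;>
    simp_all [le, Fin.ext_iff] <;> omega

theorem inf_le_left' {n : ℕ} (x y : Mnn n) : le (inf x y) x := by
  cases x <;> cases y <;> dsimp only [inf] <;> (try split_ifs) <;> simp_all [le]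

theorem inf_le_right' {n : ℕ} (x y : Mnn n) : le (inf x y) y := by
  cases x <;> cases y <;> dsimp only [inf] <;> (try split_ifs) <;> simp_all [le]

theorem le_inf' {n : ℕ} (x y z : Mnn n) (hxy : le x y) (hxz : le x z) :
    le x (inf y z) := by
  cases x <;> cases y <;> cases z <;> dsimp only [inf] <;> (try split_ifs) <;>
    simp_all [le, Fin.ext_iff] <;> omega

/-- `M_{n,n}` is a lattice. -/
instance instLattice (n : ℕ) : Lattice (Mnn n) where
  le := le
  sup := sup
  inf := inf
  le_refl := le_refl'
  le_trans := le_trans'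
  le_antisymm := le_antisymm'
  le_sup_left := le_sup_left'
  le_sup_right := le_sup_right'
  sup_le := sup_le'
  inf_le_left := inf_le_left'
  inf_le_right := inf_le_right'
  le_inf := le_inf'

/-- `M_{n,n}* = M_{n,n} ∖ {0, 1}`, the set of non-identity elements. -/
def star (n : ℕ) : Set (Mnn n) := {x | x ≠ .bot ∧ x ≠ .top}

/-- The level `{a₁, …, aₙ}` of `M_{n,n}`. -/
def aLevel (n : ℕ) : Set (Mnn n) := Set.range Mnn.a

/-- The level `{b₁, …, bₙ}` of `M_{n,n}`. -/
def bLevel (n : ℕ) : Set (Mnn n) := Set.range Mnn.b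

/-- The link element `aₙ` of the level `{a₁, …, aₙ}`. -/
def aLink (n : ℕ) (h : 0 < n) : Mnn n := .a ⟨n - 1, Nat.sub_lt h Nat.one_pos⟩

/-- The link element `b₁` of the level `{b₁, …, bₙ}`. -/
def bLink (n : ℕ) (h : 0 < n) : Mnn n := .b ⟨0, h⟩

end Mnn

/-- `L` is `ST`-meet distributive. -/
def IsSTMeetDistrib {α : Type*} [Lattice α] (S T : Set α) : Prop :=
  ∀ s ∈ S, ∀ t₁ ∈ T, ∀ t₂ ∈ T, s ⊓ (t₁ ⊔ t₂) = (s ⊓ t₁) ⊔ (s ⊓ t₂)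

/-- `L` is `ST`-join distributive. -/
def IsSTJoinDistrib {α : Type*} [Lattice α] (S T : Set α) : Prop :=
  ∀ s ∈ S, ∀ t₁ ∈ T, ∀ t₂ ∈ T, s ⊔ (t₁ ⊓ t₂) = (s ⊔ t₁) ⊓ (s ⊔ t₂)

/-- `L` is `ST`-distributive. -/
def IsSTDistrib {α : Type*} [Lattice α] (S T : Set α) : Prop :=
  IsSTMeetDistrib S T ∧ IsSTJoinDistrib S T

/-- `(S, T)` is a maximal `ST`-pair of `M_{n,n}` (subject to the conditions of
the search problem: `S, T ⊆ M_{n,n}*`, `S ∩ T = ∅`, `S ≠ ∅`, `T ≠ ∅`). -/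
def MaximalSTPair (n : ℕ) (S T : Set (Mnn n)) : Prop :=
  S ⊆ Mnn.star n ∧ T ⊆ Mnn.star n ∧ S ∩ T = ∅ ∧ S.Nonempty ∧ T.Nonempty ∧
  IsSTDistrib S T ∧
  (¬ ∃ S' : Set (Mnn n), S ⊂ S' ∧ S' ⊆ Mnn.star n ∧ S' ∩ T = ∅ ∧ IsSTDistrib S' T) ∧
  (¬ ∃ T' : Set (Mnn n), T ⊂ T' ∧ T' ⊆ Mnn.star n ∧ S ∩ T' = ∅ ∧ IsSTDistrib S T')

namespace Mnn

variable {n : ℕ}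

theorem sup_def (x y : Mnn n) : x ⊔ y = sup x y := rfl

theorem inf_def (x y : Mnn n) : x ⊓ y = inf x y := rfl

/-- The two links distribute over any pair of non-link elements taken from different levels. -/
theorem isSTDistrib_links (h : 0 < n) {i j : Fin n} (hi : (i : ℕ) ≠ n - 1) (hj : (j : ℕ) ≠ 0) :
    IsSTDistrib {aLink n h, bLink n h} {Mnn.a i, Mnn.b j} := by
  have hi' : n - 1 ≠ (i : ℕ) := hi.symm
  have hj' : 0 ≠ (j : ℕ) := hj.symm
  constructor <;> rintro s (rfl | rfl) t₁ (rfl | rfl) t₂ (rfl | rfl) <;>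
    simp [sup_def, inf_def, aLink, bLink, sup, inf, Fin.ext_iff, hi, hj, hi', hj']

/-- A non-link `a k` does not distribute over another non-link `a i` and a non-link `b j`. -/
theorem a_inf_sup_ne {i j k : Fin n} (hi : (i : ℕ) ≠ n - 1) (hj : (j : ℕ) ≠ 0)
    (hk : (k : ℕ) ≠ n - 1) (hki : k ≠ i) :
    Mnn.a k ⊓ (Mnn.a i ⊔ Mnn.b j) ≠ (Mnn.a k ⊓ Mnn.a i) ⊔ (Mnn.a k ⊓ Mnn.b j) := by
  simp [sup_def, inf_def, sup, inf, hi, hj, hk, hki]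

/-- A non-link `b k` does not codistribute over a non-link `a i` and another non-link `b j`. -/
theorem b_sup_inf_ne {i j k : Fin n} (hi : (i : ℕ) ≠ n - 1) (hj : (j : ℕ) ≠ 0)
    (hk : (k : ℕ) ≠ 0) (hkj : k ≠ j) :
    Mnn.b k ⊔ (Mnn.a i ⊓ Mnn.b j) ≠ (Mnn.b k ⊔ Mnn.a i) ⊓ (Mnn.b k ⊔ Mnn.b j) := by
  simp [sup_def, inf_def, sup, inf, hi, hj, hk, hkj]

/-- The link `aₙ` does not distribute over two distinct non-links of its level. -/
theorem aLink_inf_sup_ne (h : 0 < n) {i k : Fin n} (hi : (i : ℕ) ≠ n - 1)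
    (hk : (k : ℕ) ≠ n - 1) (hki : k ≠ i) :
    aLink n h ⊓ (Mnn.a k ⊔ Mnn.a i) ≠ (aLink n h ⊓ Mnn.a k) ⊔ (aLink n h ⊓ Mnn.a i) := by
  simp [sup_def, inf_def, aLink, sup, inf, Fin.ext_iff, hi.symm, hk.symm, Fin.val_ne_of_ne hki]

/-- The link `b₁` does not codistribute over two distinct non-links of its level. -/
theorem bLink_sup_inf_ne (h : 0 < n) {j k : Fin n} (hj : (j : ℕ) ≠ 0)
    (hk : (k : ℕ) ≠ 0) (hkj : k ≠ j) :
    bLink n h ⊔ (Mnn.b k ⊓ Mnn.b j) ≠ (bLink n h ⊔ Mnn.b k) ⊓ (bLink n h ⊔ Mnn.b j) := by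
  simp [sup_def, inf_def, bLink, sup, inf, Fin.ext_iff, hj.symm, hk.symm, Fin.val_ne_of_ne hkj]

/-- An element of `M_{n,n}*` outside `{aₙ, b₁}` and `{a i, b j}` is a non-link other than `a i`
and `b j`. -/
theorem exists_nonlink_of_mem_star (h : 0 < n) {i j : Fin n} {z : Mnn n} (hz : z ∈ star n)
    (hS : z ∉ ({aLink n h, bLink n h} : Set (Mnn n)))
    (hT : z ∉ ({Mnn.a i, Mnn.b j} : Set (Mnn n))) :
    (∃ k : Fin n, z = Mnn.a k ∧ (k : ℕ) ≠ n - 1 ∧ k ≠ i) ∨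
      ∃ k : Fin n, z = Mnn.b k ∧ (k : ℕ) ≠ 0 ∧ k ≠ j := by
  rcases z with _ | _ | k | k
  · exact absurd rfl hz.1
  · exact absurd rfl hz.2
  · exact Or.inl ⟨k, rfl, by simpa [aLink, bLink, Fin.ext_iff] using hS, by simpa using hT⟩
  · exact Or.inr ⟨k, rfl, by simpa [aLink, bLink, Fin.ext_iff] using hS, by simpa using hT⟩

end Mnn

/-- S-2-links pairs are maximal `ST`-pairs of `M_{n,n}`: `S = {aₙ, b₁}` (the
two links) and `T = {x, y}` with `x` a non-link element of the `a`-level and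
`y` a non-link element of the `b`-level. -/
theorem s_2links_maximal (n : ℕ) (hn : 3 ≤ n) (i j : Fin n)
    (hi : Mnn.a i ≠ Mnn.aLink n (by omega))
    (hj : Mnn.b j ≠ Mnn.bLink n (by omega)) :
    MaximalSTPair n {Mnn.aLink n (by omega), Mnn.bLink n (by omega)}
      {Mnn.a i, Mnn.b j} := by
  have h : 0 < n := by omega
  have hi' : (i : ℕ) ≠ n - 1 := by simpa [Mnn.aLink, Fin.ext_iff] using hi
  have hj' : (j : ℕ) ≠ 0 := by simpa [Mnn.bLink, Fin.ext_iff] using hj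
  have hai : Mnn.a i ∈ ({Mnn.a i, Mnn.b j} : Set (Mnn n)) := Or.inl rfl
  have hbj : Mnn.b j ∈ ({Mnn.a i, Mnn.b j} : Set (Mnn n)) := Or.inr rfl
  refine ⟨?_, ?_, ?_, ⟨_, Or.inl rfl⟩, ⟨_, hai⟩, Mnn.isSTDistrib_links h hi' hj', ?_, ?_⟩
  · rintro s (rfl | rfl) <;> simp [Mnn.star, Mnn.aLink, Mnn.bLink]
  · rintro t (rfl | rfl) <;> simp [Mnn.star]
  · rw [← Set.disjoint_iff_inter_eq_empty, Set.disjoint_left]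
    rintro s (rfl | rfl)
    · simpa [Mnn.aLink] using Ne.symm hi
    · simpa [Mnn.bLink] using Ne.symm hj
  · rintro ⟨S', hSS', hS', hdisj, hmeet, hjoin⟩
    obtain ⟨z, hz, hzS⟩ := Set.exists_of_ssubset hSS'
    have hzT := Set.disjoint_left.1 (Set.disjoint_iff_inter_eq_empty.2 hdisj) hz
    obtain ⟨k, rfl, hk, hki⟩ | ⟨k, rfl, hk, hkj⟩ :=
      Mnn.exists_nonlink_of_mem_star h (hS' hz) hzS hzT
    · exact Mnn.a_inf_sup_ne hi' hj' hk hki (hmeet _ hz _ hai _ hbj)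
    · exact Mnn.b_sup_inf_ne hi' hj' hk hkj (hjoin _ hz _ hai _ hbj)
  · rintro ⟨T', hTT', hT', hdisj, hmeet, hjoin⟩
    obtain ⟨z, hz, hzT⟩ := Set.exists_of_ssubset hTT'
    have hzS := Set.disjoint_right.1 (Set.disjoint_iff_inter_eq_empty.2 hdisj) hz
    obtain ⟨k, rfl, hk, hki⟩ | ⟨k, rfl, hk, hkj⟩ :=
      Mnn.exists_nonlink_of_mem_star h (hT' hz) hzS hzT
    · exact Mnn.aLink_inf_sup_ne h hi' hk hki
        (hmeet _ (Or.inl rfl) _ hz _ (hTT'.subset hai))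
    · exact Mnn.bLink_sup_inf_ne h hj' hk hkj
        (hjoin _ (Or.inr rfl) _ hz _ (hTT'.subset hbj))
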